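/- arXiv:1410.4045 — 2 statements merged into one kernel-verified Lean document; each statement's English description precedes it below -/
import Mathlib

section
/- Let M be a geometric C-minimal structure and T(M) its underlying tree. Let f be a definable partial function from M to the set of nodes (non-leaf elements) of T(M). Then dom(f) can be written as a union F ∪ K with F finite and K definable, such that f is locally constant on K, i.e., every x ∈ K has a cone neighborhood W with f constant on K ∩ W. -/
open FirstOrder Set

universe u

namespace CMinPaper

variable {M : Type u}

/-- The axioms of a (dense) C-relation. -/
def IsCRelation (C : M → M → M → Prop) : Prop :=
  (∀ x y z, C x y z → C x z y) ∧
  (∀ x y z, C x y z → ¬ C y x z) ∧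
  (∀ x y z w, C x y z → C x w z ∨ C w y z) ∧
  (∀ x y, x ≠ y → ∃ z, z ≠ y ∧ C x y z)

/-- A cone (open ball). -/
def IsCone (C : M → M → M → Prop) (s : Set M) : Prop :=
  ∃ a b : M, a ≠ b ∧ s = {x | C a x b}

/-- A 0-level set (closed ball). -/
def IsClosedBall (C : M → M → M → Prop) (s : Set M) : Prop :=
  ∃ a b : M, s = {x | ¬ C x a b}

/-- A ball is a cone or a closed ball. -/
def IsBall (C : M → M → M → Prop) (s : Set M) : Prop :=
  IsCone C s ∨ IsClosedBall C s

/-- The node `a ∧ b` of the underlying tree, viewed as the closed ball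
`{z | ¬ C z a b}` of `M` it determines. -/
def node (C : M → M → M → Prop) (a b : M) : Set M := {x | ¬ C x a b}

/-- `Δ(x,y,z)`. -/
def Delta (C : M → M → M → Prop) (x y z : M) : Prop := ¬ C x y z ∧ ¬ C y x z

/-- The (unary) sets which are definable by a quantifier-free formula with
parameters using only `C` and equality.  A term is either the variable
(`Option.none`) or a parameter (`Option.some a`). -/
inductive QFDef (C : M → M → M → Prop) : Set M → Prop
  | atomC (t₁ t₂ t₃ : Option M) :
      QFDef C {x | C (t₁.getD x) (t₂.getD x) (t₃.getD x)}
  | atomEq (t₁ t₂ : Option M) : QFDef C {x | t₁.getD x = t₂.getD x}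
  | compl {s : Set M} : QFDef C s → QFDef C sᶜ
  | union {s t : Set M} : QFDef C s → QFDef C t → QFDef C (s ∪ t)

/-- The ternary relation interpreting the symbol `r`. -/
def interpC (L : FirstOrder.Language.{u, u}) (M : Type u) [L.Structure M]
    (r : L.Relations 3) : M → M → M → Prop :=
  fun a b c => Language.Structure.RelMap r ![a, b, c]

/-- `M` is C-minimal: in every elementarily equivalent structure, every
definable (with parameters) subset is quantifier-free definable using only
`C` and `=`. -/
def CMinimal (L : FirstOrder.Language.{u, u}) (M : Type u) [L.Structure M]
    (r : L.Relations 3) : Prop :=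
  ∀ (N : Type u) (SN : L.Structure N),
    letI := SN
    L.ElementarilyEquivalent M N →
      ∀ s : Set N, Set.Definable₁ (univ : Set N) L s → QFDef (interpC L N r) s

/-- The (model-theoretic) algebraic closure of a set of parameters. -/
def acl (L : FirstOrder.Language.{u, u}) (M : Type u) [L.Structure M] (A : Set M) : Set M :=
  {a | ∃ s : Set M, Set.Definable₁ A L s ∧ s.Finite ∧ a ∈ s}

/-- The Steinitz exchange property for the algebraic closure. -/
def HasExchange (L : FirstOrder.Language.{u, u}) (M : Type u) [L.Structure M] : Prop :=
  ∀ (A : Set M) (a b : M),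
    a ∈ acl L M (A ∪ {b}) → a ∉ acl L M A → b ∈ acl L M (A ∪ {a})

/-- `M` is geometric: acl has the exchange property in every elementarily
equivalent structure. -/
def Geometric (L : FirstOrder.Language.{u, u}) (M : Type u) [L.Structure M] : Prop :=
  ∀ (N : Type u) (SN : L.Structure N),
    letI := SN
    L.ElementarilyEquivalent M N → HasExchange L N

/-- `M` is trivial: in every elementarily equivalent structure the pregeometry
given by acl is trivial. -/
def TrivialGeometry (L : FirstOrder.Language.{u, u}) (M : Type u) [L.Structure M] : Prop :=
  ∀ (N : Type u) (SN : L.Structure N),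
    letI := SN
    L.ElementarilyEquivalent M N →
      ∀ A : Set N, acl L N A = ⋃ a ∈ A, acl L N {a}

/-- `M` is definably maximal: every definable family of cones which is linearly
ordered by inclusion has a non-empty intersection. -/
def DefinablyMaximal (L : FirstOrder.Language.{u, u}) (M : Type u) [L.Structure M]
    (r : L.Relations 3) : Prop :=
  ∀ (n : ℕ) (S : Set (Fin (n + 1) → M)) (P : Set (Fin n → M)),
    Set.Definable (univ : Set M) L S →
    (∀ p ∈ P, IsCone (interpC L M r) {x | Fin.snoc p x ∈ S}) →
    (∀ p ∈ P, ∀ q ∈ P,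
      {x | Fin.snoc p x ∈ S} ⊆ {x | Fin.snoc q x ∈ S} ∨
        {x | Fin.snoc q x ∈ S} ⊆ {x | Fin.snoc p x ∈ S}) →
    P.Nonempty → (⋂ p ∈ P, {x | Fin.snoc p x ∈ S}).Nonempty

/-- Leaves of the underlying tree are the singletons. -/
def IsLeafSet (s : Set M) : Prop := ∃ x : M, s = {x}

/-- The interval `(lo, hi)` of the branch `br c`, consisting of all nodes
(coded as the closed balls they determine) strictly between the endpoints.
`lo = none` denotes `-∞`; `lo = some p` denotes the node `c ∧ p`; `hi : M`
denotes the node `c ∧ hi` (the leaf `c` when `hi = c`).  The tree ordering is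
reverse inclusion of balls. -/
def branchInterval (C : M → M → M → Prop) (c : M) (lo : Option M) (hi : M) :
    Set (Set M) :=
  {B | (∃ s, B = node C c s) ∧ ¬ IsLeafSet B ∧
    (∀ p ∈ lo, B ⊂ node C c p) ∧ node C c hi ⊂ B}

/-- `I` is an interval of the branch `br c`. -/
def IsIntervalOn (C : M → M → M → Prop) (c : M) (I : Set (Set M)) : Prop :=
  ∃ (lo : Option M) (hi : M), I = branchInterval C c lo hi

/-- `I` is a bounded interval of `br c` (bounded from below and from above). -/
def IsBoundedInterval (C : M → M → M → Prop) (c : M) (I : Set (Set M)) : Prop :=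
  ∃ p hi : M, I = branchInterval C c (some p) hi ∧ ¬ IsLeafSet (node C c hi)

/-- `I` is an unbounded (i.e. not bounded) interval of `br c`. -/
def IsUnboundedInterval (C : M → M → M → Prop) (c : M) (I : Set (Set M)) :
    Prop :=
  IsIntervalOn C c I ∧ ¬ IsBoundedInterval C c I

/-- The relation on nodes coded by `S ⊆ M²` via `(s,t) ↦ (c ∧ s, d ∧ t)`. -/
def codedRel (C : M → M → M → Prop) (S : Set (Fin 2 → M)) (c d : M)
    (B B' : Set M) : Prop :=
  ∃ s t : M, ![s, t] ∈ S ∧ B = node C c s ∧ B' = node C d t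

/-- `S ⊆ M²` codes a bijection between the set `I` of nodes of `br c` and the
set `J` of nodes of `br d`. -/
def CodesBijectionBetween (C : M → M → M → Prop) (S : Set (Fin 2 → M))
    (c d : M) (I J : Set (Set M)) : Prop :=
  (∀ B B', codedRel C S c d B B' → B ∈ I ∧ B' ∈ J) ∧
  (∀ B ∈ I, ∃! B', B' ∈ J ∧ codedRel C S c d B B') ∧
  (∀ B' ∈ J, ∃! B, B ∈ I ∧ codedRel C S c d B B')

/-- Condition (NB): there is no definable bijection between a bounded interval
and an unbounded interval of branches of the underlying tree. -/
def NB (L : FirstOrder.Language.{u, u}) (M : Type u) [L.Structure M] (r : L.Relations 3) :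
    Prop :=
  ∀ (c d : M) (S : Set (Fin 2 → M)), Set.Definable (univ : Set M) L S →
    ∀ I J : Set (Set M),
      IsBoundedInterval (interpC L M r) c I →
      IsUnboundedInterval (interpC L M r) d J →
      ¬ CodesBijectionBetween (interpC L M r) S c d I J

/-- An infinite group definable in `M`: an infinite definable `G ⊆ Mⁿ`
together with a definable subset of `M^{3n}` which is the graph of a group
operation on `G`. -/
def DefinableInfiniteGroup (L : FirstOrder.Language.{u, u}) (M : Type u)
    [L.Structure M] : Prop :=
  ∃ (n : ℕ) (G : Set (Fin n → M)) (mul : (Fin n → M) → (Fin n → M) → Fin n → M)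
    (one : Fin n → M) (inv : (Fin n → M) → Fin n → M),
    Set.Definable (univ : Set M) L G ∧ G.Infinite ∧
    Set.Definable (univ : Set M) L
      {t : (Fin n ⊕ (Fin n ⊕ Fin n)) → M |
        t ∘ Sum.inl ∈ G ∧ t ∘ Sum.inr ∘ Sum.inl ∈ G ∧
          mul (t ∘ Sum.inl) (t ∘ Sum.inr ∘ Sum.inl) = t ∘ Sum.inr ∘ Sum.inr} ∧
    one ∈ G ∧ (∀ a ∈ G, ∀ b ∈ G, mul a b ∈ G) ∧
    (∀ a ∈ G, ∀ b ∈ G, ∀ c ∈ G, mul (mul a b) c = mul a (mul b c)) ∧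
    (∀ a ∈ G, mul one a = a ∧ mul a one = a) ∧
    (∀ a ∈ G, inv a ∈ G ∧ mul a (inv a) = one ∧ mul (inv a) a = one)

/-- `g` is a C-isomorphism from `A` onto `B`. -/
def CIsoOn (C : M → M → M → Prop) (A B : Set M) (g : M → M) : Prop :=
  Set.BijOn g A B ∧ ∀ x ∈ A, ∀ y ∈ A, ∀ z ∈ A, (C x y z ↔ C (g x) (g y) (g z))

/-- The relation `C_e(f,g,h)`. -/
def CeRel (C : M → M → M → Prop) (V : Set M) (e : M) (f g h : M → M) : Prop :=
  ∃ W : Set M, IsCone C W ∧ e ∈ W ∧ W ⊆ V ∧ ∀ x ∈ W \ {e}, C (f x) (g x) (h x)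

/-- The relation `(¬C)_e(f,g,h)`. -/
def NCeRel (C : M → M → M → Prop) (V : Set M) (e : M) (f g h : M → M) : Prop :=
  ∃ W : Set M, IsCone C W ∧ e ∈ W ∧ W ⊆ V ∧ ∀ x ∈ W \ {e}, ¬ C (f x) (g x) (h x)

/-- A function is definable on `V` if its graph over `V` is definable. -/
def DefinableFunOn (L : FirstOrder.Language.{u, u}) (M : Type u) [L.Structure M]
    (V : Set M) (g : M → M) : Prop :=
  Set.Definable (univ : Set M) L {t : Fin 2 → M | t 0 ∈ V ∧ g (t 0) = t 1}

/-- A nice family of functions `{f u : u ∈ U}` on the cone `V`, with absorbing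
element `e`. -/
structure NiceFamily (L : FirstOrder.Language.{u, u}) (M : Type u) [L.Structure M]
    (C : M → M → M → Prop) where
  U : Set M
  V : Set M
  e : M
  f : M → M → M
  coneU : IsCone C U
  coneV : IsCone C V
  he : e ∈ V
  definable : Set.Definable (univ : Set M) L
    {t : Fin 3 → M | t 0 ∈ U ∧ t 1 ∈ V ∧ f (t 0) (t 1) = t 2}
  auto : ∀ u ∈ U, CIsoOn C V V (f u)
  fixe : ∀ u ∈ U, f u e = e
  star : ∀ x ∈ V \ {e}, ∃ V' : Set M, V' ⊆ V ∧ IsCone C V' ∧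
    CIsoOn C U V' fun u => f u x

namespace NiceFamily

variable {L : FirstOrder.Language.{u, u}} [L.Structure M] {C : M → M → M → Prop}

/-- `f u` is tangent to `g` relatively to the family. -/
def Tangent (F : NiceFamily L M C) (u : M) (g : M → M) : Prop :=
  u ∈ F.U ∧ ∀ u' ∈ F.U, NCeRel C F.V F.e (F.f u) (F.f u') g

/-- The set `T_g` of indices of tangents to `g`. -/
def Tset (F : NiceFamily L M C) (g : M → M) : Set M := {u | F.Tangent u g}

/-- The set `Γ_{g,u}`. -/
def Gamma (F : NiceFamily L M C) (g : M → M) (u : M) : Set M :=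
  {y | y ∈ F.U ∧ CeRel C F.V F.e (F.f u) (F.f y) g}

/-- `g` is derivable relatively to the family: it has exactly one tangent. -/
def Derivable (F : NiceFamily L M C) (g : M → M) : Prop := ∃! u, F.Tangent u g

/-- `f u` is non-dilating. -/
def NonDilating (F : NiceFamily L M C) (u : M) : Prop :=
  NCeRel C F.V F.e (fun x => F.f u (F.f u x)) (F.f u) id

/-- `u₀` is an identity element for the family. -/
def HasIdentity (F : NiceFamily L M C) (u₀ : M) : Prop :=
  u₀ ∈ F.U ∧ ∀ x ∈ F.V, F.f u₀ x = x

end NiceFamily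

/-- Continuity on `A` with respect to the topology generated by the cones. -/
def ContinuousOnCones (C : M → M → M → Prop) (A : Set M) (g : M → M) : Prop :=
  ∀ x ∈ A, ∀ W : Set M, IsCone C W → g x ∈ W →
    ∃ W' : Set M, IsCone C W' ∧ x ∈ W' ∧ ∀ y ∈ W' ∩ A, g y ∈ W

namespace IsCRelation

variable {C : M → M → M → Prop}

theorem symm (hC : IsCRelation C) {x y z : M} (h : C x y z) : C x z y := hC.1 x y z h

theorem asymm (hC : IsCRelation C) {x y z : M} (h : C x y z) : ¬ C y x z := hC.2.1 x y z h

theorem cases (hC : IsCRelation C) {x y z : M} (h : C x y z) (w : M) : C x w z ∨ C w y z :=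
  hC.2.2.1 x y z w h

theorem irrefl_left (hC : IsCRelation C) (x z : M) : ¬ C x x z := fun h => hC.asymm h h

theorem irrefl_right (hC : IsCRelation C) (x y : M) : ¬ C x y x :=
  fun h => hC.irrefl_left x y (hC.symm h)

theorem ne (hC : IsCRelation C) {x y z : M} (h : C x y z) : x ≠ y :=
  fun e => hC.irrefl_left y z (e ▸ h)

theorem apply_self (hC : IsCRelation C) {x y : M} (h : x ≠ y) : C x y y := by
  obtain ⟨z, -, hz⟩ := hC.2.2.2 x y h
  exact (hC.cases (hC.symm hz) y).resolve_right (hC.irrefl_right y z)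

/-- A cone around `b` which is cut off by a point of the cone `{y | C a y b}` is smaller. -/
theorem mono (hC : IsCRelation C) {a y z b : M} (h : C a z b) (hy : C z y b) : C a y b :=
  (hC.cases hy a).resolve_left (hC.asymm h)

/-- The cones around a given point form a chain. -/
theorem nested (hC : IsCRelation C) (a c x : M) :
    (∀ z, C a z x → C c z x) ∨ ∀ z, C c z x → C a z x := by
  by_contra! ⟨⟨z, hz, hz'⟩, w, hw, hw'⟩
  exact hC.asymm ((hC.cases hz c).resolve_right hz') ((hC.cases hw a).resolve_right hw')

theorem infinite_cone (hC : IsCRelation C) {a b : M} (hab : a ≠ b) : {z | C a z b}.Infinite := by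
  intro hfin
  induction hn : {z | C a z b}.ncard using Nat.strong_induction_on generalizing a with
  | _ n ih =>
    obtain ⟨z, hzb, hz⟩ := hC.2.2.2 a b hab
    have hz := hC.symm hz
    have hsub : {y | C z y b} ⊂ {y | C a y b} :=
      ⟨fun y hy => hC.mono hz hy, fun h => hC.irrefl_left z b (h hz)⟩
    exact ih _ (hn ▸ Set.ncard_lt_ncard hsub hfin) hzb (hfin.subset hsub.1) rfl

theorem node_comm (hC : IsCRelation C) (a b : M) : node C a b = node C b a :=
  Set.ext fun _ => not_congr ⟨hC.symm, hC.symm⟩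

theorem node_eq_of_cone (hC : IsCRelation C) {a b c : M} (h : C b a c) :
    node C a b = node C c b := by
  have key : ∀ {a c : M}, C b a c → ∀ y, C y a b → C y c b := by grind [IsCRelation]
  exact Set.ext fun y => not_congr ⟨key h y, key (hC.symm h) y⟩

theorem node_eq_of_mem (hC : IsCRelation C) {a b x : M} (hx : x ∈ node C a b)
    (hxa : ¬ C b x a) : node C x a = node C a b := by
  have hx : ¬ C x a b := hx
  refine Set.ext fun y => not_congr ⟨fun h => ?_, fun h => ?_⟩ <;> grind [IsCRelation]

theorem node_self (hC : IsCRelation C) (a : M) : node C a a = {a} := by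
  ext y
  refine ⟨fun h => by_contra fun hy => h (hC.apply_self hy), ?_⟩
  rintro rfl
  exact hC.irrefl_left _ _

theorem infinite_node (hC : IsCRelation C) {a b : M} (hab : a ≠ b) : (node C a b).Infinite :=
  (hC.infinite_cone hab).mono fun z (hz : C a z b) (hz' : C z a b) => hC.asymm hz hz'

/-- A node below `a` is of the form `a ∧ z` for infinitely many `z`. -/
theorem infinite_node_eq (hC : IsCRelation C) {a a₀ b₀ : M} (hab : a₀ ≠ b₀)
    (ha : a ∈ node C a₀ b₀) : {z | node C a z = node C a₀ b₀}.Infinite := by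
  by_cases h : C b₀ a a₀
  · refine (hC.infinite_cone (hC.ne h).symm).mono fun z hz => ?_
    have hz : C a z b₀ := hz
    change node C a z = _
    rw [hC.node_comm, hC.node_eq_of_cone hz, hC.node_comm, hC.node_eq_of_cone h]
  · refine (hC.infinite_cone hab.symm).mono fun z hz => ?_
    have hz : C b₀ z a₀ := hz
    change node C a z = _
    rw [← hC.node_eq_of_mem ha h, hC.node_comm,
      hC.node_eq_of_cone ((hC.cases hz a).resolve_left h), hC.node_comm]

end IsCRelation

/-- The points of `M` around which no cone is contained in `s` or disjoint from `s`. -/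
def coneBoundary (C : M → M → M → Prop) (s : Set M) : Set M :=
  {x | ∀ a, a ≠ x → (∃ y, C a y x ∧ y ∈ s) ∧ ∃ y, C a y x ∧ y ∉ s}

theorem mem_coneBoundary_of_not_subset {C : M → M → M → Prop} (hC : IsCRelation C) {s : Set M}
    {x : M} (hx : x ∈ s) (h : ∀ a, a ≠ x → ∃ y, C a y x ∧ y ∉ s) : x ∈ coneBoundary C s :=
  fun a ha => ⟨⟨x, hC.apply_self ha, hx⟩, h a ha⟩

theorem notMem_coneBoundary {C : M → M → M → Prop} {s : Set M} {a x : M} (hax : a ≠ x)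
    (h : ∀ y, C a y x → (y ∈ s ↔ x ∈ s)) : x ∉ coneBoundary C s := fun hx => by
  obtain ⟨⟨y, hy, hys⟩, z, hz, hzs⟩ := hx a hax
  exact hzs ((h z hz).2 ((h y hy).1 hys))

theorem exists_cone_of_notMem_coneBoundary {C : M → M → M → Prop} (hC : IsCRelation C)
    {s : Set M} {x : M} (hx : x ∉ coneBoundary C s) :
    ∃ a, a ≠ x ∧ ∀ y, C a y x → (y ∈ s ↔ x ∈ s) := by
  by_contra! h
  refine hx fun a ha => ?_
  obtain ⟨y, hy, hys⟩ := h a ha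
  have hxx := hC.apply_self ha
  by_cases hxs : x ∈ s
  · exact ⟨⟨x, hxx, hxs⟩, y, hy, by tauto⟩
  · exact ⟨⟨y, hy, by tauto⟩, x, hxx, hxs⟩

/-- A quantifier-free definable set has finite boundary. -/
theorem QFDef.finite_coneBoundary {C : M → M → M → Prop} (hC : IsCRelation C) {s : Set M}
    (hs : QFDef C s) : (coneBoundary C s).Finite := by
  rcases subsingleton_or_nontrivial M with _ | _
  · exact Set.toFinite _
  induction hs with
  | atomC t₁ t₂ t₃ =>
    refine (({t₁, t₂, t₃} : Set (Option M)).toFinite.preimage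
      (Option.some_injective M).injOn).subset fun x hx => ?_
    by_contra hmem
    simp only [Set.mem_preimage, Set.mem_insert_iff, Set.mem_singleton_iff, not_or] at hmem
    obtain ⟨w, hw⟩ := exists_ne x
    rcases t₁ with _ | a <;> rcases t₂ with _ | b <;> rcases t₃ with _ | c <;> simp at hmem
    iterate 2 exact notMem_coneBoundary hw (fun y hy => by simp [hC.irrefl_left]) hx
    · exact notMem_coneBoundary hw (fun y hy => by simp [hC.irrefl_right]) hx
    · refine notMem_coneBoundary (a := b) (by grind) (fun y hy => ?_) hx
      simp only [Option.getD_none, Option.getD_some, Set.mem_ofPred_eq]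
      constructor <;> grind [IsCRelation]
    iterate 3
      refine notMem_coneBoundary (a := a) (by grind) (fun y hy => ?_) hx
      simp only [Option.getD_none, Option.getD_some, Set.mem_ofPred_eq]
      constructor <;> grind [IsCRelation]
    · exact notMem_coneBoundary hw (fun y hy => by simp) hx
  | atomEq t₁ t₂ =>
    refine (({t₁, t₂} : Set (Option M)).toFinite.preimage
      (Option.some_injective M).injOn).subset fun x hx => ?_
    by_contra hmem
    simp only [Set.mem_preimage, Set.mem_insert_iff, Set.mem_singleton_iff, not_or] at hmem
    obtain ⟨w, hw⟩ := exists_ne x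
    rcases t₁ with _ | a <;> rcases t₂ with _ | b <;> simp at hmem
    · exact notMem_coneBoundary hw (fun y hy => by simp) hx
    · exact notMem_coneBoundary (a := b) (by grind)
        (fun y hy => by simpa [hmem] using (hC.ne hy).symm) hx
    · exact notMem_coneBoundary (a := a) (by grind)
        (fun y hy => by simpa [hmem] using (hC.ne hy).symm) hx
    · exact notMem_coneBoundary hw (fun y hy => by simp) hx
  | compl _ ih =>
    refine ih.subset fun x hx a ha => ?_
    simpa [and_comm] using hx a ha
  | @union s t _ _ ihs iht =>
    refine (ihs.union iht).subset fun x hx => ?_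
    by_contra hmem
    obtain ⟨hxs, hxt⟩ := not_or.1 hmem
    obtain ⟨a, ha, hs⟩ := exists_cone_of_notMem_coneBoundary hC hxs
    obtain ⟨b, hb, ht⟩ := exists_cone_of_notMem_coneBoundary hC hxt
    rcases hC.nested a b x with h | h
    · exact notMem_coneBoundary ha (fun y hy => or_congr (hs y hy) (ht y (h y hy))) hx
    · exact notMem_coneBoundary hb (fun y hy => or_congr (hs y (h y hy)) (ht y hy)) hx

/-- An infinite quantifier-free definable set contains a cone. -/
theorem QFDef.exists_cone_subset {C : M → M → M → Prop} (hC : IsCRelation C) {s : Set M}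
    (hs : QFDef C s) (hinf : s.Infinite) : ∃ a b, a ≠ b ∧ ∀ y, C a y b → y ∈ s := by
  obtain ⟨x, hxs, hx⟩ := (hinf.sdiff (hs.finite_coneBoundary hC)).nonempty
  by_contra! h
  exact hx (mem_coneBoundary_of_not_subset hC hxs fun a ha => h a x ha)

section Definability

variable {L : FirstOrder.Language.{u, u}} [L.Structure M]

theorem definable_interpC {A : Set M} {β : Type*} (r : L.Relations 3) (i j k : β) :
    A.Definable L {w : β → M | interpC L M r (w i) (w j) (w k)} := by
  refine ((Set.empty_definable_iff (L := L) (M := M)).2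
    ⟨r.formula ![Language.Term.var i, Language.Term.var j, Language.Term.var k], ?_⟩).mono
    (Set.empty_subset A)
  ext w
  simp only [interpC, Set.mem_ofPred_eq, Language.Formula.realize_rel]
  congr! 1
  ext l
  fin_cases l <;> rfl

theorem definable_triple {A : Set M} {β : Type*} {R : Set (Fin 3 → M)} (hR : A.Definable L R)
    (i j k : β) : A.Definable L {w : β → M | ![w i, w j, w k] ∈ R} := by
  convert hR.preimage_comp ![i, j, k] using 1
  ext w
  simp only [Set.mem_preimage, Set.mem_ofPred_eq]
  congr! 1
  ext l
  fin_cases l <;> rfl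

theorem definable_eq {A : Set M} {β : Type*} (i j : β) :
    A.Definable L {w : β → M | w i = w j} :=
  ((Set.empty_definable_iff (L := L) (M := M)).2
    ⟨(Language.Term.var i).equal (Language.Term.var j), by ext; simp⟩).mono (Set.empty_subset A)

/-- The fibre over the node `a ∧ b` of the function into the tree coded by `R`. -/
def nodeFiber (C : M → M → M → Prop) (R : Set (Fin 3 → M)) (a b : M) : Set M :=
  {z | ∃ a' b', ![z, a', b'] ∈ R ∧ node C a' b' = node C a b}

theorem definable_nodeFiber {A : Set M} (r : L.Relations 3) {R : Set (Fin 3 → M)}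
    (hR : A.Definable L R) :
    A.Definable L {v : Fin 3 → M | v 0 ∈ nodeFiber (interpC L M r) R (v 1) (v 2)} := by
  have h₁ := definable_interpC (A := A) (L := L) (M := M) r
    (Sum.inr 0 : (Fin 3 ⊕ Fin 2) ⊕ Fin 1) (Sum.inl (Sum.inl 1)) (Sum.inl (Sum.inl 2))
  have h₂ := definable_interpC (A := A) (L := L) (M := M) r
    (Sum.inr 0 : (Fin 3 ⊕ Fin 2) ⊕ Fin 1) (Sum.inl (Sum.inr 0)) (Sum.inl (Sum.inr 1))
  have h := ((definable_triple hR (Sum.inl 0 : Fin 3 ⊕ Fin 2) (Sum.inr 0) (Sum.inr 1)).inter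
    ((h₁.himp h₂).inter (h₂.himp h₁)).forall_of_finite).exists_of_finite
  convert h using 1
  ext v
  simp only [nodeFiber, node, Set.ext_iff, Set.mem_ofPred_eq, Set.mem_inter_iff, Sum.elim_inl,
    Sum.elim_inr, himp_eq, Set.sup_eq_union, Set.mem_union, Set.mem_compl_iff]
  constructor
  · rintro ⟨a', b', hR, h⟩
    refine ⟨![a', b'], hR, fun y => ?_⟩
    have := h (y 0)
    simp only [Matrix.cons_val_zero, Matrix.cons_val_one]
    tauto
  · rintro ⟨w, hR, h⟩
    refine ⟨w 0, w 1, hR, fun y => ?_⟩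
    have := h fun _ => y
    tauto

/-- The points of the fibre over `a ∧ b` around which no cone is contained in this fibre. -/
def fiberBoundary (C : M → M → M → Prop) (R : Set (Fin 3 → M)) (a b : M) : Set M :=
  {z | z ∈ nodeFiber C R a b ∧ ∀ c, c ≠ z → ∃ y, C c y z ∧ y ∉ nodeFiber C R a b}

theorem definable_fiberBoundary {A : Set M} (r : L.Relations 3) {R : Set (Fin 3 → M)}
    (hR : A.Definable L R) :
    A.Definable L {v : Fin 3 → M | v 0 ∈ fiberBoundary (interpC L M r) R (v 1) (v 2)} := by
  have hG := definable_nodeFiber r hR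
  have h₁ := definable_interpC (A := A) (L := L) (M := M) r
    (Sum.inl (Sum.inr 0) : (Fin 3 ⊕ Fin 1) ⊕ Fin 1) (Sum.inr 0) (Sum.inl (Sum.inl 0))
  have h₂ := (definable_triple hG (Sum.inr 0 : (Fin 3 ⊕ Fin 1) ⊕ Fin 1) (Sum.inl (Sum.inl 1))
    (Sum.inl (Sum.inl 2))).compl
  have h := hG.inter ((definable_eq (A := A) (L := L) (M := M) (Sum.inr 0 : Fin 3 ⊕ Fin 1)
    (Sum.inl 0)).union (h₁.inter h₂).exists_of_finite).forall_of_finite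
  convert h using 1
  ext v
  simp only [fiberBoundary, Set.mem_ofPred_eq, Set.mem_inter_iff, Sum.elim_inl,
    Sum.elim_inr, Set.mem_union, Set.mem_compl_iff]
  refine and_congr_right fun _ => ⟨fun h c => or_iff_not_imp_left.2 fun hc => ?_, fun h c hc => ?_⟩
  · obtain ⟨y, hy⟩ := h (c 0) hc
    exact ⟨fun _ => y, hy⟩
  · obtain ⟨y, hy⟩ := (h fun _ => c).resolve_left hc
    exact ⟨y 0, hy⟩

/-- The set cut out by a formula is definable over any set containing its parameters. -/
theorem definable₁_realize {A : Set M} {Θ : Type*} (ψ : L.Formula (Θ ⊕ Fin 1)) {e : Θ → M}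
    (he : ∀ θ, e θ ∈ A) : A.Definable₁ L {z | ψ.Realize (Sum.elim e fun _ => z)} := by
  refine Set.definable_iff_exists_formula_sum.2
    ⟨ψ.relabel (Sum.map (fun θ => ⟨e θ, he θ⟩) id), ?_⟩
  ext v
  simp only [Set.mem_ofPred_eq, Language.Formula.realize_relabel]
  congr! 1
  ext (θ | i)
  · rfl
  · simp [Subsingleton.elim i 0]

/-- A set definable over `A` is cut out by a formula with parameters from any type of names for
the elements of `A`. -/
theorem exists_formula_of_definable₁ {A : Set M} {Θ : Type*} {e : Θ → M}
    (he : ∀ a ∈ A, ∃ θ, e θ = a) {s : Set M} (hs : A.Definable₁ L s) :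
    ∃ ψ : L.Formula (Θ ⊕ Fin 1), ∀ z, z ∈ s ↔ ψ.Realize (Sum.elim e fun _ => z) := by
  obtain ⟨φ, hφ⟩ := Set.definable_iff_exists_formula_sum.1 hs
  choose g hg using he
  refine ⟨φ.relabel (Sum.map (fun a => g a.1 a.2) id), fun z => ?_⟩
  have := Set.ext_iff.1 hφ fun _ => z
  simp only [Set.mem_ofPred_eq] at this
  rw [this, Language.Formula.realize_relabel]
  congr! 1
  ext (a | i)
  · exact (hg _ _).symm
  · rfl

end Definability

section Ultrapower

open Filter

variable {L : FirstOrder.Language.{u, u}} [L.Structure M] {I : Type u} (U : Ultrafilter I)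

/-- The ultrapower of `M` along `U`. -/
abbrev Ultrapower (M : Type u) {I : Type u} (U : Ultrafilter I) : Type u :=
  (U : Filter I).Product fun _ : I => M

/-- The class of a sequence in the ultrapower. -/
def Ultrapower.mk (f : I → M) : Ultrapower M U := (f : (U : Filter I).Product fun _ : I => M)

theorem Ultrapower.exists_mk (x : Ultrapower M U) : ∃ f, Ultrapower.mk U f = x :=
  Quotient.exists_rep x

theorem Ultrapower.mk_eq {f g : I → M} :
    Ultrapower.mk U f = Ultrapower.mk U g ↔ ∀ᶠ i in U, f i = g i :=
  Quotient.eq''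

theorem Ultrapower.realize [Nonempty M] {β : Type*} (φ : L.Formula β) (f : β → I → M) :
    (φ.Realize fun b => Ultrapower.mk U (f b)) ↔ ∀ᶠ i in U, φ.Realize fun b => f b i :=
  Language.Ultraproduct.realize_formula_cast φ f

theorem Ultrapower.realize_sumElim [Nonempty M] {Θ : Type*} (ψ : L.Formula (Θ ⊕ Fin 1))
    (g : Θ → I → M) (f : I → M) :
    (ψ.Realize (Sum.elim (fun θ => Ultrapower.mk U (g θ)) fun _ => Ultrapower.mk U f)) ↔
      ∀ᶠ i in U, ψ.Realize (Sum.elim (fun θ => g θ i) fun _ => f i) := by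
  have h₁ : (Sum.elim (fun θ => Ultrapower.mk U (g θ)) fun _ : Fin 1 => Ultrapower.mk U f) =
      fun b => Ultrapower.mk U (Sum.elim g (fun _ => f) b) := by
    funext b; rcases b with _ | _ <;> rfl
  have h₂ : ∀ i, (Sum.elim (fun θ => g θ i) fun _ : Fin 1 => f i) =
      fun b => Sum.elim g (fun _ => f) b i := fun i => by
    funext b; rcases b with _ | _ <;> rfl
  simp only [h₁, h₂]
  exact Ultrapower.realize U ψ _

theorem Ultrapower.elementarilyEquivalent [Nonempty M] :
    L.ElementarilyEquivalent M (Ultrapower M U) :=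
  Language.elementarilyEquivalent_iff.2 fun φ => by
    rw [Language.Ultraproduct.sentence_realize, eventually_const]

theorem Ultrapower.interpC_mk [Nonempty M] (r : L.Relations 3) (f g h : I → M) :
    interpC L (Ultrapower M U) r (mk U f) (mk U g) (mk U h) ↔
      ∀ᶠ i in U, interpC L M r (f i) (g i) (h i) := by
  have h₁ : ![mk U f, mk U g, mk U h] = fun j => mk U (![f, g, h] j) := by
    funext j; fin_cases j <;> rfl
  have h₂ : ∀ i, ![f i, g i, h i] = fun j => ![f, g, h] j i := fun i => by
    funext j; fin_cases j <;> rfl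
  have := realize U (r.formula fun j : Fin 3 => Language.Term.var j) ![f, g, h]
  simp only [Language.Formula.realize_rel, Language.Term.realize_var] at this
  simpa only [interpC, h₁, h₂] using this

theorem Ultrapower.isCRelation [Nonempty M] {r : L.Relations 3}
    (hC : IsCRelation (interpC L M r)) : IsCRelation (interpC L (Ultrapower M U) r) := by
  refine ⟨fun x y z => ?_, fun x y z => ?_, fun x y z w => ?_, fun x y => ?_⟩ <;>
    obtain ⟨x, rfl⟩ := exists_mk U x <;> obtain ⟨y, rfl⟩ := exists_mk U y
  · obtain ⟨z, rfl⟩ := exists_mk U z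
    simp only [interpC_mk]
    exact fun h => h.mono fun i => hC.symm
  · obtain ⟨z, rfl⟩ := exists_mk U z
    simp only [interpC_mk, ← Ultrafilter.eventually_not]
    exact fun h => h.mono fun i => hC.asymm
  · obtain ⟨z, rfl⟩ := exists_mk U z
    obtain ⟨w, rfl⟩ := exists_mk U w
    simp only [interpC_mk, ← Ultrafilter.eventually_or]
    exact fun h => h.mono fun i hi => hC.cases hi _
  · intro h
    rw [Ne, mk_eq, ← Ultrafilter.eventually_not] at h
    have : ∀ i, ∃ z, x i ≠ y i → z ≠ y i ∧ interpC L M r (x i) (y i) z := fun i => by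
      by_cases hi : x i = y i
      · exact ⟨y i, fun h => (h hi).elim⟩
      · exact (hC.2.2.2 _ _ hi).imp fun z hz _ => hz
    choose z hz using this
    refine ⟨mk U z, ?_, ?_⟩
    · rw [Ne, mk_eq, ← Ultrafilter.eventually_not]
      exact h.mono fun i hi => (hz i hi).1
    · rw [interpC_mk]
      exact h.mono fun i hi => (hz i hi).2

/-- A criterion for the class of `f` to be non-algebraic over the parameters named by `g`. -/
theorem Ultrapower.mk_notMem_acl [Nonempty M] {Θ : Type*} {A : Set (Ultrapower M U)}
    (g : Θ → I → M) (hA : ∀ a ∈ A, ∃ θ, mk U (g θ) = a) (f : I → M)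
    (hf : ∀ ψ : L.Formula (Θ ⊕ Fin 1), ∀ᶠ i in U,
      {z | ψ.Realize (Sum.elim (fun θ => g θ i) fun _ => z)}.Finite →
        ¬ ψ.Realize (Sum.elim (fun θ => g θ i) fun _ => f i)) :
    mk U f ∉ acl L (Ultrapower M U) A := by
  rintro ⟨s, hs, hfin, hmem⟩
  obtain ⟨ψ, hψ⟩ := exists_formula_of_definable₁ hA hs
  have hinf : ∀ᶠ i in U, {z | ψ.Realize (Sum.elim (fun θ => g θ i) fun _ => z)}.Infinite := by
    filter_upwards [hf ψ, (realize_sumElim U ψ g f).1 ((hψ _).1 hmem)] with i hi hi' h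
    exact hi h hi'
  have : ∀ i, ∃ k : ℕ → M, {z | ψ.Realize (Sum.elim (fun θ => g θ i) fun _ => z)}.Infinite →
      Function.Injective k ∧ ∀ n, ψ.Realize (Sum.elim (fun θ => g θ i) fun _ => k n) := fun i => by
    by_cases hi : {z | ψ.Realize (Sum.elim (fun θ => g θ i) fun _ => z)}.Infinite
    · exact ⟨fun n => hi.natEmbedding _ n, fun _ =>
        ⟨Subtype.val_injective.comp (hi.natEmbedding _).injective,
          fun n => (hi.natEmbedding _ n).2⟩⟩
    · exact ⟨fun _ => f i, fun h => (hi h).elim⟩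
  choose k hk using this
  refine Set.infinite_of_injective_forall_mem (f := fun n => mk U fun i => k i n)
    (fun m n hmn => ?_) (fun n => ?_) hfin
  · obtain ⟨i, hi, hi'⟩ := (((mk_eq U).1 hmn).and hinf).exists
    exact (hk i hi').1 hi
  · rw [hψ, realize_sumElim]
    exact hinf.mono fun i hi => (hk i hi).2 n

/-- A formula all of whose instances in `M` are finite has finite instances in the ultrapower. -/
theorem Ultrapower.finite_realize [Nonempty M] {r : L.Relations 3}
    (hC : IsCRelation (interpC L M r)) (hmin : CMinimal L M r) {Θ : Type*}
    (ψ : L.Formula (Θ ⊕ Fin 1)) (g : Θ → I → M)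
    (hψ : ∀ i, {z | ψ.Realize (Sum.elim (fun θ => g θ i) fun _ => z)}.Finite) :
    {z | ψ.Realize (Sum.elim (fun θ => mk U (g θ)) fun _ => z)}.Finite := by
  by_contra hinf
  obtain ⟨a, b, hab, h⟩ := (hmin (Ultrapower M U) _ (elementarilyEquivalent U) _
    (definable₁_realize ψ (e := fun θ => mk U (g θ)) fun _ => trivial)).exists_cone_subset
    (isCRelation U hC) hinf
  obtain ⟨a, rfl⟩ := exists_mk U a
  obtain ⟨b, rfl⟩ := exists_mk U b
  have : ∀ i, ∃ y, a i ≠ b i → interpC L M r (a i) y (b i) ∧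
      ¬ ψ.Realize (Sum.elim (fun θ => g θ i) fun _ => y) := fun i => by
    by_contra! hi
    exact hC.infinite_cone (hi (a i)).1 ((hψ i).subset fun y => (hi y).2)
  choose y hy using this
  rw [Ne, mk_eq, ← Ultrafilter.eventually_not] at hab
  have hmem := h (mk U y) ((interpC_mk U r _ _ _).2 (hab.mono fun i hi => (hy i hi).1))
  obtain ⟨i, hi, hi'⟩ := (((realize_sumElim U ψ g y).1 hmem).and hab).exists
  exact (hy i hi').2 hi

end Ultrapower

section Genericity

variable {L : FirstOrder.Language.{u, u}} [L.Structure M]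

/-- A formula with parameters defining a given subset of `M³`, with its first coordinate as the
free variable and the other two as additional parameters. -/
theorem exists_formula_of_definable_triple {S : Set (Fin 3 → M)}
    (hS : (univ : Set M).Definable L S) :
    ∃ ψ : L.Formula ((M ⊕ Fin 2) ⊕ Fin 1), ∀ z a b,
      ψ.Realize (Sum.elim (Sum.elim id ![a, b]) fun _ => z) ↔ ![z, a, b] ∈ S := by
  obtain ⟨φ, hφ⟩ := Set.definable_iff_exists_formula_sum.1 hS
  refine ⟨φ.relabel (Sum.elim (fun m => Sum.inl (Sum.inl m.1))
    ![Sum.inr 0, Sum.inl (Sum.inr 0), Sum.inl (Sum.inr 1)]), fun z a b => ?_⟩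
  rw [hφ, Set.mem_ofPred_eq, Language.Formula.realize_relabel]
  congr! 1
  funext j
  rcases j with m | j
  · rfl
  · fin_cases j <;> rfl

theorem finite_fiberBoundary {r : L.Relations 3} (hC : IsCRelation (interpC L M r))
    (hmin : CMinimal L M r) {R : Set (Fin 3 → M)} (hR : (univ : Set M).Definable L R) (a b : M) :
    (fiberBoundary (interpC L M r) R a b).Finite := by
  obtain ⟨ψ, hψ⟩ := exists_formula_of_definable_triple (definable_nodeFiber r hR)
  have hdef := definable₁_realize (A := univ) ψ (e := Sum.elim id ![a, b]) fun _ => trivial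
  refine ((hmin M _ rfl _ hdef).finite_coneBoundary hC).subset fun z hz => ?_
  refine mem_coneBoundary_of_not_subset hC ((hψ z a b).2 hz.1) fun c hc => ?_
  obtain ⟨y, hy, hy'⟩ := hz.2 c hc
  exact ⟨y, hy, fun h => hy' ((hψ y a b).1 h)⟩

/-- An infinite set has a point outside the finite ones among finitely many given sets. -/
theorem exists_mem_forall_finite_notMem {ι : Type*} (s : ι → Set M) (t : Finset ι) {S : Set M}
    (hS : S.Infinite) : ∃ z ∈ S, ∀ i ∈ t, (s i).Finite → z ∉ s i := by
  have hfin : (⋃ i ∈ {i ∈ (t : Set ι) | (s i).Finite}, s i).Finite :=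
    (t.finite_toSet.subset fun _ hi => hi.1).biUnion fun i hi => hi.2
  obtain ⟨z, hzS, hz⟩ := (hS.sdiff hfin).nonempty
  exact ⟨z, hzS, fun i hi hi' hzi => hz (Set.mem_biUnion (show i ∈ _ from ⟨hi, hi'⟩) hzi)⟩

theorem fiberBoundary_congr {C : M → M → M → Prop} (R : Set (Fin 3 → M)) {a b a' b' : M}
    (h : node C a b = node C a' b') : fiberBoundary C R a b = fiberBoundary C R a' b' := by
  simp only [fiberBoundary, nodeFiber, h]

/-- In a geometric C-minimal structure only finitely many points lie on the boundary of their
fibre under a definable function into the nodes of the tree. -/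
theorem finite_iUnion_fiberBoundary {r : L.Relations 3} (hC : IsCRelation (interpC L M r))
    (hmin : CMinimal L M r) (hgeom : Geometric L M) {R : Set (Fin 3 → M)}
    (hR : (univ : Set M).Definable L R)
    (hnode : ∀ x a b, ![x, a, b] ∈ R → ¬ IsLeafSet (node (interpC L M r) a b)) :
    {z | ∃ a b, ![z, a, b] ∈ R ∧ z ∈ fiberBoundary (interpC L M r) R a b}.Finite := by
  by_contra hinf
  obtain ⟨m₀, -⟩ := Set.Infinite.nonempty hinf
  have : Nonempty M := ⟨m₀⟩
  let Φ := L.Formula ((M ⊕ Fin 2) ⊕ Fin 1)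
  let s : M → M → Φ → Set M := fun p q ψ =>
    {z | ψ.Realize (Sum.elim (Sum.elim id ![p, q]) fun _ => z)}
  have hstage : ∀ i : Finset Φ, ∃ x a b, x ∈ fiberBoundary (interpC L M r) R a b ∧
      (∀ ψ ∈ i, (s m₀ m₀ ψ).Finite → x ∉ s m₀ m₀ ψ) ∧
      (∀ ψ ∈ i, (s x x ψ).Finite → a ∉ s x x ψ) ∧
      ∀ ψ ∈ i, (s a x ψ).Finite → b ∉ s a x ψ := fun i => by
    obtain ⟨x, ⟨a₀, b₀, hxR, hxB⟩, hx⟩ := exists_mem_forall_finite_notMem (s m₀ m₀) i hinf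
    have hab : a₀ ≠ b₀ := fun h => hnode x a₀ b₀ hxR ⟨a₀, h ▸ hC.node_self a₀⟩
    obtain ⟨a, han, ha⟩ := exists_mem_forall_finite_notMem (s x x) i (hC.infinite_node hab)
    obtain ⟨b, hbn, hb⟩ := exists_mem_forall_finite_notMem (s a x) i (hC.infinite_node_eq hab han)
    exact ⟨x, a, b, fiberBoundary_congr R hbn ▸ hxB, hx, ha, hb⟩
  choose x a b hB hx ha hb using hstage
  let U : Ultrafilter (Finset Φ) := Ultrafilter.of Filter.atTop
  have hU : ∀ ψ : Φ, ∀ᶠ i in (U : Filter (Finset Φ)), ψ ∈ i := fun ψ =>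
    Ultrafilter.of_le Filter.atTop <| (Filter.eventually_ge_atTop {ψ}).mono fun i hi =>
      hi (Finset.mem_singleton_self ψ)
  let N := Ultrapower M U
  let A : Set N := Set.range fun m => Ultrapower.mk U fun _ => m
  let g : (Finset Φ → M) → (Finset Φ → M) → M ⊕ Fin 2 → Finset Φ → M :=
    fun p q θ i => Sum.elim id ![p i, q i] θ
  have hexch : HasExchange L N := hgeom N _ (Ultrapower.elementarilyEquivalent U)
  have hxA : Ultrapower.mk U x ∉ acl L N A := by
    refine Ultrapower.mk_notMem_acl U (g (fun _ => m₀) fun _ => m₀) ?_ x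
      fun ψ => (hU ψ).mono fun i => hx i ψ
    rintro _ ⟨m, rfl⟩
    exact ⟨Sum.inl m, rfl⟩
  have haA : Ultrapower.mk U a ∉ acl L N (A ∪ {Ultrapower.mk U x}) := by
    refine Ultrapower.mk_notMem_acl U (g x x) ?_ a fun ψ => (hU ψ).mono fun i => ha i ψ
    rintro _ (⟨m, rfl⟩ | rfl)
    · exact ⟨Sum.inl m, rfl⟩
    · exact ⟨Sum.inr 0, rfl⟩
  have hbA : Ultrapower.mk U b ∉ acl L N (A ∪ {Ultrapower.mk U a} ∪ {Ultrapower.mk U x}) := by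
    refine Ultrapower.mk_notMem_acl U (g a x) ?_ b fun ψ => (hU ψ).mono fun i => hb i ψ
    rintro _ ((⟨m, rfl⟩ | rfl) | rfl)
    · exact ⟨Sum.inl m, rfl⟩
    · exact ⟨Sum.inr 0, rfl⟩
    · exact ⟨Sum.inr 1, rfl⟩
  have hxab : Ultrapower.mk U x ∈ acl L N (A ∪ {Ultrapower.mk U a} ∪ {Ultrapower.mk U b}) := by
    obtain ⟨ψ, hψ⟩ := exists_formula_of_definable_triple (definable_fiberBoundary r hR)
    refine ⟨{z | ψ.Realize (Sum.elim (fun θ => Ultrapower.mk U (g a b θ)) fun _ => z)},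
      definable₁_realize ψ ?_, Ultrapower.finite_realize U hC hmin ψ _ fun i => ?_,
      (Ultrapower.realize_sumElim U ψ _ _).2 (.of_forall fun i => (hψ _ _ _).2 (hB i))⟩
    · rintro (m | j)
      · exact Or.inl (Or.inl ⟨m, rfl⟩)
      · fin_cases j
        · exact Or.inl (Or.inr rfl)
        · exact Or.inr rfl
    · exact (finite_fiberBoundary hC hmin hR (a i) (b i)).subset fun z hz => (hψ z _ _).1 hz
  exact hbA (hexch _ _ _ hxab fun h => haA (hexch _ _ _ h hxA))

end Genericity

theorem statement3 {L : FirstOrder.Language.{u, u}} {M : Type u} [L.Structure M]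
    (r : L.Relations 3)
    (hC : IsCRelation (interpC L M r))
    (hmin : CMinimal L M r)
    (hgeom : Geometric L M)
    (R : Set (Fin 3 → M))
    (hRdef : Set.Definable (univ : Set M) L R)
    (hfun : ∀ x a b a' b', ![x, a, b] ∈ R → ![x, a', b'] ∈ R →
      node (interpC L M r) a b = node (interpC L M r) a' b')
    (hnode : ∀ x a b, ![x, a, b] ∈ R → ¬ IsLeafSet (node (interpC L M r) a b)) :
    ∃ F K : Set M, F.Finite ∧ Set.Definable₁ (univ : Set M) L K ∧
      {x | ∃ a b, ![x, a, b] ∈ R} = F ∪ K ∧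
      ∀ x ∈ K, ∃ W : Set M, IsCone (interpC L M r) W ∧ x ∈ W ∧
        ∀ y ∈ K ∩ W, ∀ a b a' b', ![x, a, b] ∈ R → ![y, a', b'] ∈ R →
          node (interpC L M r) a b = node (interpC L M r) a' b' := by
  have hKdef : (univ : Set M).Definable₁ L
      {z | ∃ a b, ![z, a, b] ∈ R ∧ z ∉ fiberBoundary (interpC L M r) R a b} := by
    have h := ((definable_triple hRdef (Sum.inl 0 : Fin 1 ⊕ Fin 2) (Sum.inr 0) (Sum.inr 1)).inter
      (definable_triple (definable_fiberBoundary r hRdef).compl (Sum.inl 0 : Fin 1 ⊕ Fin 2)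
        (Sum.inr 0) (Sum.inr 1))).exists_of_finite
    unfold Set.Definable₁
    convert h using 1
    ext v
    constructor
    · rintro ⟨a, b, h⟩
      exact ⟨![a, b], h⟩
    · rintro ⟨w, h⟩
      exact ⟨w 0, w 1, h⟩
  refine ⟨{z | ∃ a b, ![z, a, b] ∈ R ∧ z ∈ fiberBoundary (interpC L M r) R a b},
    {z | ∃ a b, ![z, a, b] ∈ R ∧ z ∉ fiberBoundary (interpC L M r) R a b},
    finite_iUnion_fiberBoundary hC hmin hgeom hRdef hnode, hKdef, ?_, ?_⟩
  · ext z
    simp only [Set.mem_union, Set.mem_ofPred_eq, ← exists_or, ← and_or_left, em, and_true]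
  · rintro x ⟨a₀, b₀, hxR, hx⟩
    have hx : ∃ c, c ≠ x ∧ ∀ y, interpC L M r c y x → y ∈ nodeFiber (interpC L M r) R a₀ b₀ := by
      by_contra! h
      exact hx ⟨⟨a₀, b₀, hxR, rfl⟩, h⟩
    obtain ⟨c, hc, h⟩ := hx
    refine ⟨{y | interpC L M r c y x}, ⟨c, x, hc, rfl⟩, hC.apply_self hc, ?_⟩
    rintro y ⟨-, hy⟩ a b a' b' hab hab'
    obtain ⟨a₁, b₁, hyR, hnode₁⟩ := h y hy
    rw [hfun x a b a₀ b₀ hab hxR, hfun y a' b' a₁ b₁ hab' hyR, hnode₁]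

end CMinPaper
end

section
/- Let M be a C-minimal structure, F = {f_u : u ∈ U} a nice family of functions with domain V and absorbing element e, and g : V → V a definable function with g(e) = e. Let u,u',v,v' be elements of U such that v ∈ Γ_{g,u} and v' ∈ Γ_{g,u'}. If v is not an element of Γ_{g,u'}, then v' is an element of Γ_{g,u}. -/
open FirstOrder Set

universe u

namespace CMinPaper

variable {M : Type u}

/-- Membership in a common cone avoiding `a` is transitive. -/
theorem IsCRelation.trans_of_symm {C : M → M → M → Prop} (hC : IsCRelation C) {a b c d : M}
    (hbc : C a b c) (hbd : C a b d) : C a d c := by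
  obtain ⟨hsymm, hasymm, htrans, -⟩ := hC
  rcases htrans a b c d hbc with h | h
  · exact h
  · refine hsymm _ _ _ ((htrans a b d c hbd).resolve_right fun h' => ?_)
    exact hasymm _ _ _ (hsymm _ _ _ h) (hsymm _ _ _ h')

/-- Two cones with a common point are comparable. -/
theorem IsCone.subset_or_subset {C : M → M → M → Prop} (hC : IsCRelation C) {s t : Set M}
    (hs : IsCone C s) (ht : IsCone C t) {e : M} (hes : e ∈ s) (het : e ∈ t) :
    s ⊆ t ∨ t ⊆ s := by
  have htr : ∀ {a b c d : M}, C a b c → C a b d → C a d c := hC.trans_of_symm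
  obtain ⟨hsymm, hasymm, htrans, -⟩ := hC
  obtain ⟨a, b, -, rfl⟩ := hs
  obtain ⟨c, d, -, rfl⟩ := ht
  change C a e b at hes
  change C c e d at het
  by_cases h : C c a e
  · refine Or.inl fun x (hx : C a x b) => ?_
    have hxe : C a x e := htr (hsymm _ _ _ hes) (hsymm _ _ _ hx)
    have hcx : C c x e := (htrans c a e x h).resolve_right (hasymm _ _ _ hxe)
    exact htr het (hsymm _ _ _ hcx)
  · refine Or.inr fun x (hx : C c x d) => ?_
    have hxe : C c x e := htr (hsymm _ _ _ het) (hsymm _ _ _ hx)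
    exact htr hes (hsymm _ _ _ ((htrans c x e a hxe).resolve_left h))

theorem statement9 {L : FirstOrder.Language.{u, u}} {M : Type u} [L.Structure M]
    (r : L.Relations 3)
    (hC : IsCRelation (interpC L M r))
    (hmin : CMinimal L M r)
    (F : NiceFamily L M (interpC L M r))
    (g : M → M) (hg : DefinableFunOn L M F.V g)
    (hgV : Set.MapsTo g F.V F.V) (hge : g F.e = F.e)
    (u u' v v' : M) (hu : u ∈ F.U) (hu' : u' ∈ F.U)
    (hv : v ∈ F.Gamma g u) (hv' : v' ∈ F.Gamma g u')
    (hnot : v ∉ F.Gamma g u') :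
    v' ∈ F.Gamma g u := by
  obtain ⟨hvU, W, hW, heW, hWV, hvg⟩ := hv
  obtain ⟨hv'U, W', hW', heW', hWV', hv'g⟩ := hv'
  obtain ⟨S, hS, heS, hSW, hSW'⟩ : ∃ S, IsCone (interpC L M r) S ∧ F.e ∈ S ∧ S ⊆ W ∧ S ⊆ W' := by
    rcases hW.subset_or_subset hC hW' heW heW' with h | h
    · exact ⟨W, hW, heW, subset_rfl, h⟩
    · exact ⟨W', hW', heW', h, subset_rfl⟩
  obtain ⟨x, hxS, hx⟩ : ∃ x ∈ S \ {F.e},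
      ¬ interpC L M r (F.f u' x) (F.f v x) (g x) := by
    by_contra! h
    exact hnot ⟨hvU, S, hS, heS, hSW.trans hWV, h⟩
  -- The relation between the parameters can be read off at the single point `x`.
  have huvv' : interpC L M r u v v' := by
    obtain ⟨V', -, -, -, hiso⟩ := F.star x ⟨hWV (hSW hxS.1), hxS.2⟩
    rw [hiso u hu v hvU v' hv'U]
    have h₁ := hvg x ⟨hSW hxS.1, hxS.2⟩
    have h₂ := hv'g x ⟨hSW' hxS.1, hxS.2⟩
    obtain ⟨hsymm, hasymm, htrans, -⟩ := hC
    have h₃ := (htrans _ _ _ (F.f v x) h₂).resolve_left hx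
    exact hsymm _ _ _ ((htrans _ _ _ (F.f v' x) (hsymm _ _ _ h₁)).resolve_right
      fun h => hasymm _ _ _ h₃ (hsymm _ _ _ h))
  refine ⟨hv'U, W, hW, heW, hWV, fun y hy => ?_⟩
  obtain ⟨V', -, -, -, hiso⟩ := F.star y ⟨hWV hy.1, hy.2⟩
  exact hC.trans_of_symm (hvg y hy) ((hiso u hu v hvU v' hv'U).1 huvv')

end CMinPaper
end
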